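/- Consider for a ∈ ℝ and b ≥ 1 the series S^{a,b} = ∑_{i=1}^∞ |sin(aπi)|^i / i^b. (i) For every a ∈ ℝ, the series converges if b > 1. (ii) If b = 1 and a = ℓ/(2m) where ℓ and m are odd positive integers, then the series diverges. -/

import Mathlib

open Filter

lemma sum_Icc_one_eq (f : ℕ → ℝ) (N : ℕ) :
    ∑ i ∈ Finset.Icc 1 N, f i = ∑ i ∈ Finset.range N, f (i + 1) := by
  induction N with
  | zero => simp
  | succ n ih => rw [Finset.sum_Icc_succ_top (by omega), ih, Finset.sum_range_succ]

/-- for the series `S^{a,b} = ∑_{i=1}^∞ |sin(aπi)|^i / i^b`: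
(i) for every real `a`, the series converges whenever `b > 1`;
(ii) if `b = 1` and `a = ℓ/(2m)` with `ℓ, m` odd positive integers,
the series diverges. -/
theorem example7_series_convergence :
    (∀ a b : ℝ, 1 < b → ∃ l : ℝ,
      Tendsto (fun N : ℕ => ∑ i ∈ Finset.Icc 1 N,
        |Real.sin (a * Real.pi * i)| ^ i / (i : ℝ) ^ b) atTop (nhds l)) ∧
    (∀ ℓ m : ℕ, Odd ℓ → Odd m → 0 < ℓ → 0 < m →
      ¬ ∃ l : ℝ,
        Tendsto (fun N : ℕ => ∑ i ∈ Finset.Icc 1 N,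
          |Real.sin (((ℓ : ℝ) / (2 * (m : ℝ))) * Real.pi * i)| ^ i / (i : ℝ) ^ (1 : ℝ))
          atTop (nhds l)) := by
  constructor
  · intro a b hb
    set f : ℕ → ℝ := fun i => |Real.sin (a * Real.pi * i)| ^ i / (i : ℝ) ^ b with hf
    have hs : Summable f := by
      refine Summable.of_nonneg_of_le (fun i => by positivity) (fun i => ?_)
        (Real.summable_one_div_nat_rpow.mpr hb)
      simp only [hf]
      gcongr
      exact pow_le_one₀ (abs_nonneg _) (Real.abs_sin_le_one _)
    refine ⟨∑' i, f (i + 1), ?_⟩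
    have := ((summable_nat_add_iff 1).mpr hs).hasSum.tendsto_sum_nat
    exact this.congr (fun N => (sum_Icc_one_eq f N).symm)
  · rintro ℓ m hl hm hl0 hm0 ⟨l, hlim⟩
    set f : ℕ → ℝ := fun i =>
      |Real.sin (((ℓ : ℝ) / (2 * (m : ℝ))) * Real.pi * i)| ^ i / (i : ℝ) ^ (1 : ℝ) with hf
    have h1 : Tendsto (fun N => ∑ i ∈ Finset.range N, f (i + 1)) atTop (nhds l) :=
      hlim.congr (fun N => sum_Icc_one_eq f N)
    have h2 : Summable (fun i => f (i + 1)) :=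
      ((hasSum_iff_tendsto_nat_of_nonneg (fun i => by simp only [hf]; positivity) l).mpr
        h1).summable
    have h3 : Summable f := (summable_nat_add_iff 1).mp h2
    have hinj : Function.Injective (fun k : ℕ => m * (2 * k + 1)) := by
      intro x y hxy
      have := Nat.eq_of_mul_eq_mul_left hm0 hxy
      omega
    have h4 := h3.comp_injective hinj
    have hmR : (0 : ℝ) < m := by exact_mod_cast hm0
    have h5 : ∀ k : ℕ, f (m * (2 * k + 1)) = 1 / ((m : ℝ) * (2 * k + 1)) := by
      intro k
      obtain ⟨j, hj⟩ : Odd (ℓ * (2 * k + 1)) := hl.mul ⟨k, rfl⟩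
      have hjR : (ℓ : ℝ) * (2 * k + 1) = 2 * j + 1 := by exact_mod_cast hj
      have harg : ((ℓ : ℝ) / (2 * (m : ℝ))) * Real.pi * ((m * (2 * k + 1) : ℕ) : ℝ)
          = j * Real.pi + Real.pi / 2 := by
        push_cast
        have : ((ℓ : ℝ) / (2 * (m : ℝ))) * Real.pi * (m * (2 * k + 1))
            = ((ℓ : ℝ) * (2 * k + 1)) * Real.pi / 2 := by
          field_simp
        rw [this, hjR]
        ring
      simp only [hf]
      rw [harg, Real.sin_add_pi_div_two, Real.cos_nat_mul_pi, Real.rpow_one]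
      simp
    have h6 : Summable (fun k : ℕ => 1 / ((k + 1 : ℕ) : ℝ)) := by
      refine Summable.of_nonneg_of_le (fun k => by positivity) (fun k => ?_)
        (h4.mul_left (2 * (m : ℝ)))
      simp only [Function.comp]
      rw [h5]
      push_cast
      rw [mul_one_div, div_le_div_iff₀ (by positivity) (by positivity)]
      have : (0 : ℝ) ≤ k := by positivity
      nlinarith
    exact Real.not_summable_one_div_natCast
      ((summable_nat_add_iff (f := fun k : ℕ => 1 / (k : ℝ)) 1).mp h6)
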